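/- Fix 0 ≤ L₀ < L < L̃, ρ > 0, T > 0, m ∈ (0,1) with mT < √ρ(L̃ − L)/2, and parameters μ, τ ≥ 1. Define r(x,t) = (x − L̃)² − m(t − T/2)², η = e^{μr}, q = τη, θ = e^{q}, and Pv = v_{ttx} − ρ v_{xxx}. Define B₁ = 3ρq_x, B₂ = −3ρq_x² + q_t², B₃ = −q_x, B₄ = −2q_t, B₅ = 2q_x q_t, B₆ = −q_x q_t² + ρ q_x³, S₂ = 3ρq_xx − q_tt, S₅ = −2q_tx, S₆ = ρq_xxx − 3ρq_x q_xx − q_ttx + 2q_t q_tx + q_x q_tt, and for a smooth function w set I₁(w) = −ρ w_{xxx} + w_{ttx} + B₂ w_x + B₅ w_t and I₂(w) = B₁ w_{xx} + B₄ w_{tx} + B₃ w_{tt} + B₆ w. Then for every smooth v on [L₀,L]×[0,T], writing ṽ = θv, one has pointwise θ Pv = I₁(ṽ) + I₂(ṽ) + S₂ ṽ_x + S₅ ṽ_t + S₆ ṽ; moreover there exist μ₀ ≥ 1 and C > 0 (depending only on ρ, m, T, L₀, L, L̃) such that for all μ ≥ μ₀, τ ≥ 1 and all smooth v: 2 ∫₀^T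 ∫_{L₀}^{L} I₁(ṽ) I₂(ṽ) dx dt ≤ C ( ∫₀^T ∫_{L₀}^{L} θ² (Pv)² dx dt + τ²μ⁴ ∫₀^T ∫_{L₀}^{L} (ṽ_x² + ṽ_t²) η² dx dt + τ⁴μ⁶ ∫₀^T ∫_{L₀}^{L} ṽ² η² dx dt ). -/

import Mathlib

open MeasureTheory

noncomputable section

/-- Partial derivative in the first (space) variable. -/
def pdx (f : ℝ → ℝ → ℝ) : ℝ → ℝ → ℝ := fun x t => deriv (fun y => f y t) x

/-- Partial derivative in the second (time) variable. -/
def pdt (f : ℝ → ℝ → ℝ) : ℝ → ℝ → ℝ := fun x t => deriv (fun s => f x s) t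

/-- The Carleman weight `η(x,t) = exp(μ((x − L̃)² − m(t − T/2)²))`. -/
def carEta (Lt T m μ : ℝ) : ℝ → ℝ → ℝ := fun x t =>
  Real.exp (μ * ((x - Lt) ^ 2 - m * (t - T / 2) ^ 2))

/-- `q = τη`. -/
def carQ (Lt T m μ τ : ℝ) : ℝ → ℝ → ℝ := fun x t => τ * carEta Lt T m μ x t

/-- `θ = e^q`. -/
def carTheta (Lt T m μ τ : ℝ) : ℝ → ℝ → ℝ := fun x t => Real.exp (carQ Lt T m μ τ x t)

/-- The third-order operator `Pv = v_ttx − ρ v_xxx`. -/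
def carP (ρ : ℝ) (v : ℝ → ℝ → ℝ) : ℝ → ℝ → ℝ := fun x t =>
  pdx (pdt (pdt v)) x t - ρ * pdx (pdx (pdx v)) x t

/-- `I₁(w) = −ρ w_xxx + w_ttx + B₂ w_x + B₅ w_t` with
`B₂ = −3ρq_x² + q_t²`, `B₅ = 2q_x q_t`. -/
def carI1 (ρ Lt T m μ τ : ℝ) (w : ℝ → ℝ → ℝ) : ℝ → ℝ → ℝ := fun x t =>
  -ρ * pdx (pdx (pdx w)) x t + pdx (pdt (pdt w)) x t
    + (-(3 * ρ * (pdx (carQ Lt T m μ τ) x t) ^ 2) + (pdt (carQ Lt T m μ τ) x t) ^ 2)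
        * pdx w x t
    + (2 * pdx (carQ Lt T m μ τ) x t * pdt (carQ Lt T m μ τ) x t) * pdt w x t

/-- `I₂(w) = B₁ w_xx + B₄ w_tx + B₃ w_tt + B₆ w` with `B₁ = 3ρq_x`, `B₄ = −2q_t`,
`B₃ = −q_x`, `B₆ = −q_x q_t² + ρ q_x³`. -/
def carI2 (ρ Lt T m μ τ : ℝ) (w : ℝ → ℝ → ℝ) : ℝ → ℝ → ℝ := fun x t =>
  (3 * ρ * pdx (carQ Lt T m μ τ) x t) * pdx (pdx w) x t
    + (-(2 * pdt (carQ Lt T m μ τ) x t)) * pdx (pdt w) x t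
    + (-(pdx (carQ Lt T m μ τ) x t)) * pdt (pdt w) x t
    + (-(pdx (carQ Lt T m μ τ) x t) * (pdt (carQ Lt T m μ τ) x t) ^ 2
        + ρ * (pdx (carQ Lt T m μ τ) x t) ^ 3) * w x t

/-- `S(w) = S₂ w_x + S₅ w_t + S₆ w` with `S₂ = 3ρq_xx − q_tt`, `S₅ = −2q_tx`,
`S₆ = ρq_xxx − 3ρ q_x q_xx − q_ttx + 2 q_t q_tx + q_x q_tt`. -/
def carS (ρ Lt T m μ τ : ℝ) (w : ℝ → ℝ → ℝ) : ℝ → ℝ → ℝ := fun x t =>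
  (3 * ρ * pdx (pdx (carQ Lt T m μ τ)) x t - pdt (pdt (carQ Lt T m μ τ)) x t) * pdx w x t
    + (-(2 * pdx (pdt (carQ Lt T m μ τ)) x t)) * pdt w x t
    + (ρ * pdx (pdx (pdx (carQ Lt T m μ τ))) x t
        - 3 * ρ * pdx (carQ Lt T m μ τ) x t * pdx (pdx (carQ Lt T m μ τ)) x t
        - pdx (pdt (pdt (carQ Lt T m μ τ))) x t
        + 2 * pdt (carQ Lt T m μ τ) x t * pdx (pdt (carQ Lt T m μ τ)) x t
        + pdx (carQ Lt T m μ τ) x t * pdt (pdt (carQ Lt T m μ τ)) x t) * w x t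

end

open scoped ContDiff

/-- Smooth functions of two variables. -/
def Sm (f : ℝ → ℝ → ℝ) : Prop := ContDiff ℝ ∞ (Function.uncurry f)

lemma Sm.hx {f : ℝ → ℝ → ℝ} (h : Sm f) (x t : ℝ) :
    HasDerivAt (fun y => f y t) (pdx f x t) x := by
  have h1 : ContDiff ℝ ∞ (fun y : ℝ => Function.uncurry f (y, t)) :=
    ContDiff.comp h (contDiff_id.prodMk contDiff_const)
  have h2 : DifferentiableAt ℝ (fun y : ℝ => f y t) x :=
    (h1.differentiable (by simp)) x
  exact h2.hasDerivAt

lemma Sm.ht {f : ℝ → ℝ → ℝ} (h : Sm f) (x t : ℝ) :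
    HasDerivAt (fun s => f x s) (pdt f x t) t := by
  have h1 : ContDiff ℝ ∞ (fun s : ℝ => Function.uncurry f (x, s)) :=
    ContDiff.comp h (contDiff_const.prodMk contDiff_id)
  have h2 : DifferentiableAt ℝ (fun s : ℝ => f x s) t :=
    (h1.differentiable (by simp)) t
  exact h2.hasDerivAt

lemma Sm.pdx {f : ℝ → ℝ → ℝ} (h : Sm f) : Sm (pdx f) := by
  have h1 : ContDiff ℝ ∞ (fun p : ℝ × ℝ => fderiv ℝ (Function.uncurry f) p (1, 0)) :=
    (ContDiff.fderiv_right h (m := ∞) (by simp)).clm_apply contDiff_const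
  have h2 : Function.uncurry (_root_.pdx f)
      = fun p : ℝ × ℝ => fderiv ℝ (Function.uncurry f) p (1, 0) := by
    funext p
    obtain ⟨x, t⟩ := p
    have h3 : HasFDerivAt (Function.uncurry f) (fderiv ℝ (Function.uncurry f) (x, t)) (x, t) :=
      ((ContDiff.differentiable h (by simp)) (x, t)).hasFDerivAt
    have h4 : HasDerivAt (fun y : ℝ => (y, t)) ((1 : ℝ), (0 : ℝ)) x :=
      (hasDerivAt_id x).prodMk (hasDerivAt_const x t)
    exact (h3.comp_hasDerivAt x h4).deriv
  unfold Sm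
  rw [h2]
  exact h1

lemma Sm.pdt {f : ℝ → ℝ → ℝ} (h : Sm f) : Sm (pdt f) := by
  have h1 : ContDiff ℝ ∞ (fun p : ℝ × ℝ => fderiv ℝ (Function.uncurry f) p (0, 1)) :=
    (ContDiff.fderiv_right h (m := ∞) (by simp)).clm_apply contDiff_const
  have h2 : Function.uncurry (_root_.pdt f)
      = fun p : ℝ × ℝ => fderiv ℝ (Function.uncurry f) p (0, 1) := by
    funext p
    obtain ⟨x, t⟩ := p
    have h3 : HasFDerivAt (Function.uncurry f) (fderiv ℝ (Function.uncurry f) (x, t)) (x, t) :=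
      ((ContDiff.differentiable h (by simp)) (x, t)).hasFDerivAt
    have h4 : HasDerivAt (fun y : ℝ => (x, y)) ((0 : ℝ), (1 : ℝ)) t :=
      (hasDerivAt_const t x).prodMk (hasDerivAt_id t)
    exact (h3.comp_hasDerivAt t h4).deriv
  unfold Sm
  rw [h2]
  exact h1

lemma Sm.add {f g : ℝ → ℝ → ℝ} (hf : Sm f) (hg : Sm g) : Sm (fun x t => f x t + g x t) :=
  ContDiff.add hf hg
lemma Sm.sub {f g : ℝ → ℝ → ℝ} (hf : Sm f) (hg : Sm g) : Sm (fun x t => f x t - g x t) :=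
  ContDiff.sub hf hg
lemma Sm.neg {f : ℝ → ℝ → ℝ} (hf : Sm f) : Sm (fun x t => - f x t) :=
  ContDiff.neg hf
lemma Sm.mul {f g : ℝ → ℝ → ℝ} (hf : Sm f) (hg : Sm g) : Sm (fun x t => f x t * g x t) :=
  ContDiff.mul hf hg
lemma Sm.pow {f : ℝ → ℝ → ℝ} (hf : Sm f) (n : ℕ) : Sm (fun x t => f x t ^ n) :=
  ContDiff.pow hf n
lemma Sm.exp {f : ℝ → ℝ → ℝ} (hf : Sm f) : Sm (fun x t => Real.exp (f x t)) :=
  ContDiff.exp hf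
lemma Sm.const (c : ℝ) : Sm (fun _ _ => c) := contDiff_const
lemma Sm.fst : Sm (fun x _ => x) := contDiff_fst
lemma Sm.snd : Sm (fun _ t => t) := contDiff_snd
lemma Sm.cont {f : ℝ → ℝ → ℝ} (hf : Sm f) : Continuous (Function.uncurry f) :=
  ContDiff.continuous hf

lemma pdx_add {f g : ℝ → ℝ → ℝ} (hf : Sm f) (hg : Sm g) :
    pdx (fun x t => f x t + g x t) = fun x t => pdx f x t + pdx g x t := by
  funext x t; exact ((hf.hx x t).add (hg.hx x t)).deriv
lemma pdt_add {f g : ℝ → ℝ → ℝ} (hf : Sm f) (hg : Sm g) :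
    pdt (fun x t => f x t + g x t) = fun x t => pdt f x t + pdt g x t := by
  funext x t; exact ((hf.ht x t).add (hg.ht x t)).deriv
lemma pdx_mul {f g : ℝ → ℝ → ℝ} (hf : Sm f) (hg : Sm g) :
    pdx (fun x t => f x t * g x t) = fun x t => pdx f x t * g x t + f x t * pdx g x t := by
  funext x t; exact ((hf.hx x t).mul (hg.hx x t)).deriv
lemma pdt_mul {f g : ℝ → ℝ → ℝ} (hf : Sm f) (hg : Sm g) :
    pdt (fun x t => f x t * g x t) = fun x t => pdt f x t * g x t + f x t * pdt g x t := by
  funext x t; exact ((hf.ht x t).mul (hg.ht x t)).deriv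
lemma pdx_th {q g : ℝ → ℝ → ℝ} (hq : Sm q) (hg : Sm g) :
    pdx (fun x t => Real.exp (q x t) * g x t)
      = fun x t => Real.exp (q x t) * (pdx q x t * g x t + pdx g x t) := by
  funext x t
  refine (((hq.hx x t).exp).mul (hg.hx x t)).deriv.trans ?_
  ring
lemma pdt_th {q g : ℝ → ℝ → ℝ} (hq : Sm q) (hg : Sm g) :
    pdt (fun x t => Real.exp (q x t) * g x t)
      = fun x t => Real.exp (q x t) * (pdt q x t * g x t + pdt g x t) := by
  funext x t
  refine (((hq.ht x t).exp).mul (hg.ht x t)).deriv.trans ?_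
  ring

lemma Sm.eta (Lt T m μ : ℝ) : Sm (carEta Lt T m μ) := by
  unfold Sm carEta Function.uncurry
  fun_prop
lemma Sm.q (Lt T m μ τ : ℝ) : Sm (carQ Lt T m μ τ) := (Sm.const τ).mul (Sm.eta Lt T m μ)

lemma part1 (ρ Lt T m μ τ : ℝ) (v w : ℝ → ℝ → ℝ) (hv : Sm v)
    (hw : ∀ y s : ℝ, w y s = carTheta Lt T m μ τ y s * v y s) (x t : ℝ) :
    carTheta Lt T m μ τ x t * carP ρ v x t =
      carI1 ρ Lt T m μ τ w x t + carI2 ρ Lt T m μ τ w x t + carS ρ Lt T m μ τ w x t := by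
  have hw' : w = fun y s => Real.exp (carQ Lt T m μ τ y s) * v y s := by
    funext y s; exact hw y s
  subst hw'
  have hq := Sm.q Lt T m μ τ
  unfold carTheta carP carI1 carI2 carS
  generalize carQ Lt T m μ τ = q at *
  have hqx := hq.pdx
  have hqt := hq.pdt
  have hqtt := hqt.pdt
  have hqxx := hqx.pdx
  have hvx := hv.pdx
  have hvt := hv.pdt
  have hvtt := hvt.pdt
  have hvxx := hvx.pdx
  have e1 := pdx_th hq hv
  have s1 := (hqx.mul hv).add hvx
  have e2 := pdx_th hq s1
  rw [pdx_add (hqx.mul hv) hvx, pdx_mul hqx hv] at e2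
  have s2 := (hqx.mul s1).add (((hqxx.mul hv).add (hqx.mul hvx)).add hvxx)
  have e3 := pdx_th hq s2
  rw [pdx_add (hqx.mul s1) (((hqxx.mul hv).add (hqx.mul hvx)).add hvxx), pdx_mul hqx s1,
    pdx_add (hqx.mul hv) hvx, pdx_mul hqx hv, pdx_add ((hqxx.mul hv).add (hqx.mul hvx)) hvxx,
    pdx_add (hqxx.mul hv) (hqx.mul hvx), pdx_mul hqxx hv, pdx_mul hqx hvx] at e3
  have f1 := pdt_th hq hv
  have r1 := (hqt.mul hv).add hvt
  have f2 := pdt_th hq r1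
  rw [pdt_add (hqt.mul hv) hvt, pdt_mul hqt hv] at f2
  have r2 := (hqt.mul r1).add (((hqtt.mul hv).add (hqt.mul hvt)).add hvtt)
  have g1 := pdx_th hq r1
  rw [pdx_add (hqt.mul hv) hvt, pdx_mul hqt hv] at g1
  have g2 := pdx_th hq r2
  rw [pdx_add (hqt.mul r1) (((hqtt.mul hv).add (hqt.mul hvt)).add hvtt), pdx_mul hqt r1,
    pdx_add (hqt.mul hv) hvt, pdx_mul hqt hv, pdx_add ((hqtt.mul hv).add (hqt.mul hvt)) hvtt,
    pdx_add (hqtt.mul hv) (hqt.mul hvt), pdx_mul hqtt hv, pdx_mul hqt hvt] at g2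
  rw [e1, e2, e3, f1, f2, g1, g2]

  ring

/-- double integral -/
noncomputable def DI (L₀ L T : ℝ) (f : ℝ → ℝ → ℝ) : ℝ := ∫ t in (0:ℝ)..T, (∫ x in L₀..L, f x t)

lemma inner_cont (L₀ L : ℝ) {f : ℝ → ℝ → ℝ} (hf : Continuous (Function.uncurry f)) :
    Continuous (fun t => ∫ x in L₀..L, f x t) := by
  apply intervalIntegral.continuous_parametric_intervalIntegral_of_continuous'
  exact hf.comp continuous_swap

lemma sec_cont {f : ℝ → ℝ → ℝ} (hf : Continuous (Function.uncurry f)) (t : ℝ) :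
    Continuous (fun x => f x t) := hf.comp (by fun_prop : Continuous fun x : ℝ => (x, t))

lemma DI_add (L₀ L T : ℝ) {f g : ℝ → ℝ → ℝ} (hf : Continuous (Function.uncurry f))
    (hg : Continuous (Function.uncurry g)) :
    DI L₀ L T (fun x t => f x t + g x t) = DI L₀ L T f + DI L₀ L T g := by
  unfold DI
  rw [← intervalIntegral.integral_add ((inner_cont L₀ L hf).intervalIntegrable _ _)
    ((inner_cont L₀ L hg).intervalIntegrable _ _)]
  congr 1
  funext t
  exact intervalIntegral.integral_add ((sec_cont hf t).intervalIntegrable _ _)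
    ((sec_cont hg t).intervalIntegrable _ _)

lemma DI_smul (L₀ L T c : ℝ) (f : ℝ → ℝ → ℝ) :
    DI L₀ L T (fun x t => c * f x t) = c * DI L₀ L T f := by
  unfold DI
  simp only [intervalIntegral.integral_const_mul]

lemma DI_mono {L₀ L T : ℝ} (h1 : L₀ ≤ L) (hT : 0 ≤ T) {f g : ℝ → ℝ → ℝ}
    (hf : Continuous (Function.uncurry f)) (hg : Continuous (Function.uncurry g))
    (h : ∀ x ∈ Set.Icc L₀ L, ∀ t ∈ Set.Icc 0 T, f x t ≤ g x t) :
    DI L₀ L T f ≤ DI L₀ L T g := by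
  unfold DI
  apply intervalIntegral.integral_mono_on hT ((inner_cont L₀ L hf).intervalIntegrable _ _)
    ((inner_cont L₀ L hg).intervalIntegrable _ _)
  intro t ht
  apply intervalIntegral.integral_mono_on h1 ((sec_cont hf t).intervalIntegrable _ _)
    ((sec_cont hg t).intervalIntegrable _ _)
  intro x hx
  exact h x hx t ht

lemma DI_pdx (L₀ L T : ℝ) {F : ℝ → ℝ → ℝ} (hF : Sm F) (ha : ∀ t, F L₀ t = 0)
    (hb : ∀ t, F L t = 0) : DI L₀ L T (pdx F) = 0 := by
  unfold DI
  have : ∀ t, ∫ x in L₀..L, pdx F x t = 0 := by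
    intro t
    rw [intervalIntegral.integral_eq_sub_of_hasDerivAt (fun x _ => hF.hx x t)
      ((sec_cont hF.pdx.cont t).intervalIntegrable _ _), ha, hb, sub_zero]
  simp [this]

lemma DI_pdt (L₀ L T : ℝ) {F : ℝ → ℝ → ℝ} (hF : Sm F) (ha : ∀ x, F x 0 = 0)
    (hb : ∀ x, F x T = 0) : DI L₀ L T (pdt F) = 0 := by
  unfold DI
  have hc := hF.pdt.cont
  rw [MeasureTheory.intervalIntegral_intervalIntegral_swap
    (F := fun t x => pdt F x t)]
  swap
  · have hs : Continuous (Function.uncurry fun t x => pdt F x t) := hc.comp continuous_swap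
    exact (hs.continuousOn.integrableOn_compact
      (isCompact_uIcc.prod isCompact_uIcc)).mono_set
      (Set.prod_mono Set.uIoc_subset_uIcc Set.uIoc_subset_uIcc)
  have : ∀ x, ∫ t in (0:ℝ)..T, pdt F x t = 0 := by
    intro x
    rw [intervalIntegral.integral_eq_sub_of_hasDerivAt (fun t _ => hF.ht x t)
      ((hc.comp (by fun_prop : Continuous fun t : ℝ => (x, t))).intervalIntegrable _ _), ha, hb, sub_zero]
  simp [this]

lemma cb {c K p : ℝ} (h : |c| ≤ K) : c * p ≤ K * |p| := by
  calc c * p ≤ |c * p| := le_abs_self _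
    _ = |c| * |p| := abs_mul _ _
    _ ≤ K * |p| := by gcongr

lemma mb {a b A B : ℝ} (ha : |a| ≤ A) (hb : |b| ≤ B) : |a * b| ≤ A * B := by
  rw [abs_mul]
  exact mul_le_mul ha hb (abs_nonneg _) ((abs_nonneg _).trans ha)

lemma pb {a b A B : ℝ} (ha : |a| ≤ A) (hb : |b| ≤ B) : |a + b| ≤ A + B :=
  (abs_add_le a b).trans (add_le_add ha hb)

lemma nb (r : ℝ) (hr : 0 ≤ r) : |r| ≤ r := (abs_of_nonneg hr).le

lemma alg1 {μ ν Q w wx α D d X e n l M a b g : ℝ} (hM : 1 ≤ M)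
    (hν : ν * μ = 1) (hν1 : |ν| ≤ 1) (hα : |α| ≤ M) (hD : |D| ≤ M) (hX : |X| ≤ 1) (hn : |n| ≤ 1)
    (ha : a = μ ^ 3 * Q ^ 2 * w) (hb : b = μ ^ 2 * Q * wx) (hg : g = μ ^ 3 * Q * w)
    (hDd : D ^ 2 = l ^ 2 - 4 * d) (hnd : d * μ * Q * e = n) :
    l ^ 2 * e * a ^ 2 ≤ μ ^ 5 * (3 * Q ^ 2 * (-2 * μ * α * Q) * D * X * w ^ 2
        + Q ^ 3 * (-2) * X * w ^ 2
        + Q ^ 3 * D * (e * D * μ * Q - 2 * μ * α * n) * w ^ 2 + Q ^ 3 * D * X * (2 * w * wx))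
      + 100 * M ^ 4 * (|a * b| + |a * g|) := by
  have key : l ^ 2 * e * a ^ 2 = μ ^ 5 * (3 * Q ^ 2 * (-2 * μ * α * Q) * D * X * w ^ 2
        + Q ^ 3 * (-2) * X * w ^ 2
        + Q ^ 3 * D * (e * D * μ * Q - 2 * μ * α * n) * w ^ 2 + Q ^ 3 * D * X * (2 * w * wx))
      + (4 * n * ν + 6 * α * D * X + 2 * X * ν + 2 * α * D * n) * (a * g)
      + ((-2) * D * X) * (a * b) := by
    subst ha hb hg
    linear_combination (-(e * (μ ^ 3 * Q ^ 2 * w) ^ 2)) * hDd + 4 * μ ^ 5 * Q ^ 3 * w ^ 2 * hnd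
      - (4 * n + 2 * X) * μ ^ 5 * Q ^ 3 * w ^ 2 * hν
  have c1 : |4 * n * ν + 6 * α * D * X + 2 * X * ν + 2 * α * D * n| ≤ 100 * M ^ 4 := by
    refine (pb (pb (pb (mb (mb (nb 4 (by norm_num)) hn) hν1)
      (mb (mb (mb (nb 6 (by norm_num)) hα) hD) hX)) (mb (mb (nb 2 (by norm_num)) hX) hν1))
      (mb (mb (mb (nb 2 (by norm_num)) hα) hD) hn)).trans ?_
    have h2 : 1 ≤ M ^ 2 := one_le_pow₀ hM
    nlinarith
  have c2 : |(-2) * D * X| ≤ 100 * M ^ 4 := by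
    refine (mb (mb (show |(-2:ℝ)| ≤ 2 by norm_num) hD) hX).trans ?_
    have h2 : 1 ≤ M ^ 3 := one_le_pow₀ hM
    nlinarith
  have := cb (p := a * g) c1
  have := cb (p := a * b) c2
  linarith

lemma alg2 {μ ν Q w wt s m D d X Y e n1 n2 T M a c g : ℝ} (hM : 1 ≤ M)
    (hν : ν * μ = 1) (hν1 : |ν| ≤ 1) (hm : |m| ≤ 1) (hs : |s| ≤ M) (hD : |D| ≤ M) (hX : |X| ≤ 1)
    (hY : |Y| ≤ 1) (hn1 : |n1| ≤ 1) (hn2 : |n2| ≤ 1)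
    (ha : a = μ ^ 3 * Q ^ 2 * w) (hb : c = μ ^ 2 * Q * wt) (hg : g = μ ^ 3 * Q * w)
    (hDd : D ^ 2 = T ^ 2 - 4 * d) (hnd : d * μ * Q * e = n2) :
    T ^ 2 * X * e * a ^ 2 ≤ μ ^ 5 * (3 * Q ^ 2 * (-2 * m * μ * s * Q) * X * D * Y * w ^ 2
        + Q ^ 3 * (-2 * m * μ * s * n1) * D * Y * w ^ 2 + Q ^ 3 * X * (-2) * Y * w ^ 2
        + Q ^ 3 * X * D * (e * D * μ * Q - 2 * m * μ * s * n2) * w ^ 2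
        + Q ^ 3 * X * D * Y * (2 * w * wt))
      + 100 * M ^ 4 * (|a * c| + |a * g|) := by
  have key : T ^ 2 * X * e * a ^ 2
      = μ ^ 5 * (3 * Q ^ 2 * (-2 * m * μ * s * Q) * X * D * Y * w ^ 2
        + Q ^ 3 * (-2 * m * μ * s * n1) * D * Y * w ^ 2 + Q ^ 3 * X * (-2) * Y * w ^ 2
        + Q ^ 3 * X * D * (e * D * μ * Q - 2 * m * μ * s * n2) * w ^ 2
        + Q ^ 3 * X * D * Y * (2 * w * wt))
      + (4 * X * n2 * ν + 6 * m * s * X * D * Y + 2 * m * s * n1 * D * Y + 2 * X * Y * ν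
          + 2 * m * s * n2 * X * D) * (a * g)
      + ((-2) * X * D * Y) * (a * c) := by
    subst ha hb hg
    linear_combination (-(X * e * (μ ^ 3 * Q ^ 2 * w) ^ 2)) * hDd
      + 4 * X * μ ^ 5 * Q ^ 3 * w ^ 2 * hnd
      - (4 * X * n2 + 2 * X * Y) * μ ^ 5 * Q ^ 3 * w ^ 2 * hν
  have c1 : |4 * X * n2 * ν + 6 * m * s * X * D * Y + 2 * m * s * n1 * D * Y + 2 * X * Y * ν
          + 2 * m * s * n2 * X * D| ≤ 100 * M ^ 4 := by
    refine (pb (pb (pb (pb (mb (mb (mb (nb 4 (by norm_num)) hX) hn2) hν1)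
      (mb (mb (mb (mb (mb (nb 6 (by norm_num)) hm) hs) hX) hD) hY))
      (mb (mb (mb (mb (mb (nb 2 (by norm_num)) hm) hs) hn1) hD) hY))
      (mb (mb (mb (nb 2 (by norm_num)) hX) hY) hν1))
      (mb (mb (mb (mb (mb (nb 2 (by norm_num)) hm) hs) hn2) hX) hD)).trans ?_
    have h2 : 1 ≤ M ^ 2 := one_le_pow₀ hM
    nlinarith
  have c2 : |(-2) * X * D * Y| ≤ 100 * M ^ 4 := by
    refine (mb (mb (mb (show |(-2:ℝ)| ≤ 2 by norm_num) hX) hD) hY).trans ?_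
    have h2 : 1 ≤ M ^ 3 := one_le_pow₀ hM
    nlinarith
  have := cb (p := a * g) c1
  have := cb (p := a * c) c2
  linarith

lemma alg3 {ρ μ ν Q w wx wt wxx wtx wtt α s m D1 D2 X Y e1 e2 n1 n2 M a b c g : ℝ} (hM : 1 ≤ M)
    (hν : ν * μ = 1) (hν1 : |ν| ≤ 1) (hm : |m| ≤ 1) (hs : |s| ≤ M) (hα : |α| ≤ M) (hρ : |ρ| ≤ M)
    (hD1 : |D1| ≤ M) (hD2 : |D2| ≤ M) (hX : |X| ≤ 1) (he1 : |e1| ≤ 1) (he2 : |e2| ≤ 1)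
    (hY : |Y| ≤ 1) (hn1 : |n1| ≤ 1) (hn2 : |n2| ≤ 1)
    (ha : a = μ ^ 3 * Q ^ 2 * w) (hb : b = μ ^ 2 * Q * wx)
    (hc : c = μ ^ 2 * Q * wt) (hg : g = μ ^ 3 * Q * w)
    (Qx Qt Xx Xt Yx Yt I2 Px Pt F : ℝ)
    (hQx : Qx = -2 * μ * α * Q) (hQt : Qt = -2 * m * μ * s * Q)
    (hXx : Xx = e1 * D1 * μ * Q - 2 * μ * α * n1) (hXt : Xt = -2 * m * μ * s * n1)
    (hYx : Yx = -2 * μ * α * n2) (hYt : Yt = e2 * D2 * μ * Q - 2 * m * μ * s * n2)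
    (hI2 : I2 = 3 * ρ * Qx * wxx + (-(2 * Qt)) * wtx + (-Qx) * wtt
      + (-Qx * Qt ^ 2 + ρ * Qx ^ 3) * w)
    (hF : F = μ ^ 4 * Q ^ 2 * X * Y)
    (hPx : Px = μ ^ 4 * (2 * Q * Qx * X * Y + Q ^ 2 * Xx * Y + Q ^ 2 * X * Yx))
    (hPt : Pt = μ ^ 4 * (2 * Q * Qt * X * Y + Q ^ 2 * Xt * Y + Q ^ 2 * X * Yt)) :
    8 * α * (ρ * α ^ 2 - m ^ 2 * s ^ 2) * X * Y * a ^ 2 ≤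
      (Px * w * (-6 * ρ * α * wx + 4 * m * s * wt) + F * wx * (-6 * ρ * α * wx + 4 * m * s * wt)
        + F * w * (6 * ρ * wx - 6 * ρ * α * wxx + 4 * m * s * wtx))
      + (Pt * w * (2 * α * wt) + F * wt * (2 * α * wt) + F * w * (2 * α * wtt))
      + 100 * M ^ 4 * (|a * b| + |a * c| + |g * b| + |g * c| + |b * c| + b ^ 2 + c ^ 2 + |g * I2|) := by
  have key : 8 * α * (ρ * α ^ 2 - m ^ 2 * s ^ 2) * X * Y * a ^ 2 =
      (Px * w * (-6 * ρ * α * wx + 4 * m * s * wt) + F * wx * (-6 * ρ * α * wx + 4 * m * s * wt)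
        + F * w * (6 * ρ * wx - 6 * ρ * α * wxx + 4 * m * s * wtx))
      + (Pt * w * (2 * α * wt) + F * wt * (2 * α * wt) + F * w * (2 * α * wtt))
      + ((-1) * X * Y) * (g * I2)
      + (6 * ρ * α * ((-4) * α * X * Y + (-2) * α * n1 * Y + (-2) * α * n2 * X)
          + (-6) * ρ * ν * X * Y) * (g * b)
      + (6 * ρ * α * e1 * D1 * Y) * (a * b)
      + ((-4) * m * s * ((-4) * α * X * Y + (-2) * α * n1 * Y + (-2) * α * n2 * X)
        + (-2) * α * ((-4) * m * s * X * Y + (-2) * m * s * n1 * Y + (-2) * m * s * n2 * X)) * (g * c)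
      + ((-4) * m * s * e1 * D1 * Y + (-2) * α * e2 * D2 * X) * (a * c)
      + (6 * ρ * α * X * Y) * (b ^ 2) + ((-4) * m * s * X * Y) * (b * c)
      + ((-2) * α * X * Y) * (c ^ 2) := by
    subst ha hb hc hg hF hPx hPt hI2 hQx hQt hXx hXt hYx hYt
    linear_combination (6 * ρ * X * Y * μ ^ 4 * Q ^ 2 * w * wx) * hν
  have h1 : 1 ≤ M ^ 4 := one_le_pow₀ hM
  have h2 : 1 ≤ M ^ 2 := one_le_pow₀ hM
  have hMM : M ≤ M ^ 4 := le_self_pow₀ hM (by norm_num)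
  have h24 : M ^ 2 ≤ M ^ 4 := pow_le_pow_right₀ hM (by norm_num)
  have h34 : M ^ 3 ≤ M ^ 4 := pow_le_pow_right₀ hM (by norm_num)
  have m1 : |(-1:ℝ)| ≤ 1 := by norm_num
  have m2 : |(-2:ℝ)| ≤ 2 := by norm_num
  have m4 : |(-4:ℝ)| ≤ 4 := by norm_num
  have m6 : |(-6:ℝ)| ≤ 6 := by norm_num
  have p6 : |(6:ℝ)| ≤ 6 := by norm_num
  have q1 : |(-1) * X * Y| ≤ 100 * M ^ 4 := by
    refine (mb (mb m1 hX) hY).trans ?_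
    linarith
  have A1 : |(-4) * α * X * Y + (-2) * α * n1 * Y + (-2) * α * n2 * X| ≤ 8 * M := by
    refine (pb (pb (mb (mb (mb m4 hα) hX) hY) (mb (mb (mb m2 hα) hn1) hY))
      (mb (mb (mb m2 hα) hn2) hX)).trans ?_
    linarith
  have A2 : |(-4) * m * s * X * Y + (-2) * m * s * n1 * Y + (-2) * m * s * n2 * X| ≤ 8 * M := by
    refine (pb (pb (mb (mb (mb (mb m4 hm) hs) hX) hY) (mb (mb (mb (mb m2 hm) hs) hn1) hY))
      (mb (mb (mb (mb m2 hm) hs) hn2) hX)).trans ?_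
    linarith
  have q2 : |6 * ρ * α * ((-4) * α * X * Y + (-2) * α * n1 * Y + (-2) * α * n2 * X)
          + (-6) * ρ * ν * X * Y| ≤ 100 * M ^ 4 := by
    refine (pb (mb (mb (mb p6 hρ) hα) A1) (mb (mb (mb (mb m6 hρ) hν1) hX) hY)).trans ?_
    linarith
  have q3 : |6 * ρ * α * e1 * D1 * Y| ≤ 100 * M ^ 4 := by
    refine (mb (mb (mb (mb (mb p6 hρ) hα) he1) hD1) hY).trans ?_
    linarith
  have q4 : |(-4) * m * s * ((-4) * α * X * Y + (-2) * α * n1 * Y + (-2) * α * n2 * X)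
        + (-2) * α * ((-4) * m * s * X * Y + (-2) * m * s * n1 * Y + (-2) * m * s * n2 * X)|
        ≤ 100 * M ^ 4 := by
    refine (pb (mb (mb (mb m4 hm) hs) A1) (mb (mb m2 hα) A2)).trans ?_
    linarith
  have q5 : |(-4) * m * s * e1 * D1 * Y + (-2) * α * e2 * D2 * X| ≤ 100 * M ^ 4 := by
    refine (pb (mb (mb (mb (mb (mb m4 hm) hs) he1) hD1) hY)
      (mb (mb (mb (mb m2 hα) he2) hD2) hX)).trans ?_
    linarith
  have q6 : |6 * ρ * α * X * Y| ≤ 100 * M ^ 4 := by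
    refine (mb (mb (mb (mb p6 hρ) hα) hX) hY).trans ?_
    linarith
  have q7 : |(-4) * m * s * X * Y| ≤ 100 * M ^ 4 := by
    refine (mb (mb (mb (mb m4 hm) hs) hX) hY).trans ?_
    linarith
  have q8 : |(-2) * α * X * Y| ≤ 100 * M ^ 4 := by
    refine (mb (mb (mb m2 hα) hX) hY).trans ?_
    linarith
  have r1 := cb (p := g * I2) q1
  have r2 := cb (p := g * b) q2
  have r3 := cb (p := a * b) q3
  have r4 := cb (p := g * c) q4
  have r5 := cb (p := a * c) q5
  have r6 := cb (p := b ^ 2) q6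
  have r7 := cb (p := b * c) q7
  have r8 := cb (p := c ^ 2) q8
  rw [abs_of_nonneg (sq_nonneg b)] at r6
  rw [abs_of_nonneg (sq_nonneg c)] at r8
  linarith

/-- bound of the lower order terms -/
lemma algS {ρ μ ν Q w wx wt α s m M a b c g S : ℝ} (hM : 1 ≤ M)
    (hν : ν * μ = 1) (hν1 : |ν| ≤ 1) (hm : |m| ≤ 1) (hs : |s| ≤ M) (hα : |α| ≤ M) (hρ : |ρ| ≤ M)
    (ha : a = μ ^ 3 * Q ^ 2 * w) (hb : b = μ ^ 2 * Q * wx)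
    (hc : c = μ ^ 2 * Q * wt) (hg : g = μ ^ 3 * Q * w)
    (Qx Qt Qxx Qtt Qtx Qxxx Qttx : ℝ)
    (hQx : Qx = -2 * μ * α * Q) (hQt : Qt = -2 * m * μ * s * Q)
    (hQxx : Qxx = (4 * μ ^ 2 * α ^ 2 + 2 * μ) * Q)
    (hQtt : Qtt = (4 * m ^ 2 * μ ^ 2 * s ^ 2 - 2 * m * μ) * Q)
    (hQtx : Qtx = 4 * m * μ ^ 2 * α * s * Q)
    (hQxxx : Qxxx = -(12 * μ ^ 2 * α + 8 * μ ^ 3 * α ^ 3) * Q)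
    (hQttx : Qttx = (4 * m ^ 2 * μ ^ 2 * s ^ 2 - 2 * m * μ) * (-2 * μ * α * Q))
    (hS : S = (3 * ρ * Qxx - Qtt) * wx + (-(2 * Qtx)) * wt
      + (ρ * Qxxx - 3 * ρ * Qx * Qxx - Qttx + 2 * Qt * Qtx + Qx * Qtt) * w) :
    S ^ 2 ≤ 4 * (100 * M ^ 4) ^ 2 * (a ^ 2 + b ^ 2 + c ^ 2 + g ^ 2) := by
  have key : S = (3 * ρ * (4 * α ^ 2 + 2 * ν) + (-1) * (4 * m ^ 2 * s ^ 2 + (-2) * m * ν)) * b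
      + ((-8) * m * α * s) * c
      + ((-1) * ρ * (12 * α * ν + 8 * α ^ 3) + 2 * α * (4 * m ^ 2 * s ^ 2 + (-2) * m * ν)) * g
      + (6 * ρ * α * (4 * α ^ 2 + 2 * ν) + (-16) * m ^ 2 * α * s ^ 2
        + (-2) * α * (4 * m ^ 2 * s ^ 2 + (-2) * m * ν)) * a := by
    subst ha hb hc hg hS hQx hQt hQxx hQtt hQtx hQxxx hQttx
    linear_combination (-(6 * ρ + 2 * m) * (μ * Q * wx) + (12 * ρ * α + 4 * m * α) * μ ^ 2 * Q * w
      - (12 * ρ * α + 4 * α * m) * μ ^ 2 * Q ^ 2 * w) * hν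
  have h1 : 1 ≤ M ^ 4 := one_le_pow₀ hM
  have hMM : M ≤ M ^ 4 := le_self_pow₀ hM (by norm_num)
  have h24 : M ^ 2 ≤ M ^ 4 := pow_le_pow_right₀ hM (by norm_num)
  have h34 : M ^ 3 ≤ M ^ 4 := pow_le_pow_right₀ hM (by norm_num)
  have m1 : |(-1:ℝ)| ≤ 1 := by norm_num
  have m2 : |(-2:ℝ)| ≤ 2 := by norm_num
  have m8 : |(-8:ℝ)| ≤ 8 := by norm_num
  have m16 : |(-16:ℝ)| ≤ 16 := by norm_num
  have hα2 : |α ^ 2| ≤ M ^ 2 := by rw [abs_pow]; gcongr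
  have hα3 : |α ^ 3| ≤ M ^ 3 := by rw [abs_pow]; gcongr
  have hs2 : |s ^ 2| ≤ M ^ 2 := by rw [abs_pow]; gcongr
  have hm2 : |m ^ 2| ≤ 1 := by rw [abs_pow]; exact pow_le_one₀ (abs_nonneg _) hm
  have A1 := pb (mb (nb 4 (by norm_num)) hα2) (mb (nb 2 (by norm_num)) hν1)
  have A2 := pb (mb (mb (nb 4 (by norm_num)) hm2) hs2) (mb (mb m2 hm) hν1)
  have A3 := pb (mb (mb (nb 12 (by norm_num)) hα) hν1) (mb (nb 8 (by norm_num)) hα3)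
  have c1 : |3 * ρ * (4 * α ^ 2 + 2 * ν) + (-1) * (4 * m ^ 2 * s ^ 2 + (-2) * m * ν)|
      ≤ 100 * M ^ 4 := by
    refine (pb (mb (mb (nb 3 (by norm_num)) hρ) A1) (mb m1 A2)).trans ?_
    linarith
  have c2 : |(-8) * m * α * s| ≤ 100 * M ^ 4 := by
    refine (mb (mb (mb m8 hm) hα) hs).trans ?_
    linarith
  have c3 : |(-1) * ρ * (12 * α * ν + 8 * α ^ 3) + 2 * α * (4 * m ^ 2 * s ^ 2 + (-2) * m * ν)|
      ≤ 100 * M ^ 4 := by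
    refine (pb (mb (mb m1 hρ) A3) (mb (mb (nb 2 (by norm_num)) hα) A2)).trans ?_
    linarith
  have c4 : |6 * ρ * α * (4 * α ^ 2 + 2 * ν) + (-16) * m ^ 2 * α * s ^ 2
        + (-2) * α * (4 * m ^ 2 * s ^ 2 + (-2) * m * ν)| ≤ 100 * M ^ 4 := by
    refine (pb (pb (mb (mb (mb (nb 6 (by norm_num)) hρ) hα) A1) (mb (mb (mb m16 hm2) hα) hs2))
      (mb (mb m2 hα) A2)).trans ?_
    linarith
  have sq : ∀ {k z K : ℝ}, |k| ≤ K → (k * z) ^ 2 ≤ K ^ 2 * z ^ 2 := by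
    intro k z K h
    rw [mul_pow]
    have : k ^ 2 ≤ K ^ 2 := by rw [← sq_abs k]; gcongr
    gcongr
  have r1 := sq (z := b) c1
  have r2 := sq (z := c) c2
  have r3 := sq (z := g) c3
  have r4 := sq (z := a) c4
  have four : ∀ p q r u : ℝ, (p + q + r + u) ^ 2 ≤ 4 * (p ^ 2 + q ^ 2 + r ^ 2 + u ^ 2) := by
    intro p q r u
    linarith [sq_nonneg (p - q), sq_nonneg (p - r), sq_nonneg (p - u), sq_nonneg (q - r),
      sq_nonneg (q - u), sq_nonneg (r - u)]
  rw [key]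
  refine (four _ _ _ _).trans ?_
  linarith

lemma algF {X Y e1 e2 a b c g P1 P2 P3 l T c0 K I2 : ℝ} (hl : 0 < l) (hT : 0 < T) (hc0 : 0 < c0)
    (hK : 0 ≤ K) (hX : X = 1 - e1) (hY : Y = 1 - e2)
    (h1 : l ^ 2 * e1 * a ^ 2 ≤ P1 + K * (|a * b| + |a * g|))
    (h2 : T ^ 2 * X * e2 * a ^ 2 ≤ P2 + K * (|a * c| + |a * g|))
    (h3 : c0 * X * Y * a ^ 2 ≤ P3
      + K * (|a * b| + |a * c| + |g * b| + |g * c| + |b * c| + b ^ 2 + c ^ 2 + |g * I2|))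
    (K1 : ℝ) (hK1 : K1 = K * (1 / l ^ 2 + 1 / T ^ 2 + 1 / c0)) (K2 : ℝ) (hK2 : 0 ≤ K2) :
    K2 * a ^ 2 ≤ 2 * K2 * (1 / l ^ 2 * P1 + 1 / T ^ 2 * P2 + 1 / c0 * P3)
      + (K2 * (3 * K1 ^ 2 + 6 * K1) + K1 ^ 2 * K2 ^ 2) * (b ^ 2 + c ^ 2 + g ^ 2) + I2 ^ 2 := by
  set E := |a * b| + |a * c| + |a * g| + |g * b| + |g * c| + |b * c| + b ^ 2 + c ^ 2 + |g * I2| with hE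
  have pl : 0 < 1 / l ^ 2 := by positivity
  have pT : 0 < 1 / T ^ 2 := by positivity
  have pc : 0 < 1 / c0 := by positivity
  have hK1p : 0 ≤ K1 := by rw [hK1]; positivity
  have t1 := abs_nonneg (a * b)
  have t2 := abs_nonneg (a * c)
  have t3 := abs_nonneg (a * g)
  have t4 := abs_nonneg (g * b)
  have t5 := abs_nonneg (g * c)
  have t6 := abs_nonneg (b * c)
  have t7 := abs_nonneg (g * I2)
  have t8 := sq_nonneg b
  have t9 := sq_nonneg c
  have g1 : l ^ 2 * e1 * a ^ 2 ≤ P1 + K * E := h1.trans (by gcongr; linarith)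
  have g2 : T ^ 2 * X * e2 * a ^ 2 ≤ P2 + K * E := h2.trans (by gcongr; linarith)
  have g3 : c0 * X * Y * a ^ 2 ≤ P3 + K * E := h3.trans (by gcongr; linarith)
  have f1 := mul_le_mul_of_nonneg_left g1 pl.le
  have f2 := mul_le_mul_of_nonneg_left g2 pT.le
  have f3 := mul_le_mul_of_nonneg_left g3 pc.le
  have i1 : 1 / l ^ 2 * (l ^ 2 * e1 * a ^ 2) = e1 * a ^ 2 := by field_simp
  have i2 : 1 / T ^ 2 * (T ^ 2 * X * e2 * a ^ 2) = X * e2 * a ^ 2 := by field_simp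
  have i3 : 1 / c0 * (c0 * X * Y * a ^ 2) = X * Y * a ^ 2 := by field_simp
  rw [i1] at f1
  rw [i2] at f2
  rw [i3] at f3
  have tot : a ^ 2 ≤ (1 / l ^ 2 * P1 + 1 / T ^ 2 * P2 + 1 / c0 * P3) + K1 * E := by
    have : a ^ 2 = e1 * a ^ 2 + X * e2 * a ^ 2 + X * Y * a ^ 2 := by subst hX hY; ring
    rw [hK1, this]
    linarith
  have young : ∀ p q : ℝ, |p * q| ≤ (p ^ 2 + q ^ 2) / 2 := by
    intro p q
    rw [abs_le]
    constructor <;> linarith [sq_nonneg (p - q), sq_nonneg (p + q)]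
  have yK : ∀ q : ℝ, K1 * |a * q| ≤ a ^ 2 / 6 + 3 / 2 * K1 ^ 2 * q ^ 2 := by
    intro q
    have h := young a (3 * K1 * q)
    have : |a * (3 * K1 * q)| = 3 * (K1 * |a * q|) := by
      rw [show a * (3 * K1 * q) = (3 * K1) * (a * q) by ring, abs_mul,
        abs_of_nonneg (by positivity : 0 ≤ 3 * K1)]
      ring
    rw [this] at h
    linarith
  have y1 := yK b
  have y2 := yK c
  have y3 := yK g
  have y4 := mul_le_mul_of_nonneg_left (young g b) hK1p
  have y5 := mul_le_mul_of_nonneg_left (young g c) hK1p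
  have y6 := mul_le_mul_of_nonneg_left (young b c) hK1p
  have y7 : 2 * (K1 * K2) * |g * I2| ≤ I2 ^ 2 + K1 ^ 2 * K2 ^ 2 * g ^ 2 := by
    have h := young (K1 * K2 * g) I2
    have : |K1 * K2 * g * I2| = K1 * K2 * |g * I2| := by
      rw [mul_assoc (K1 * K2), abs_mul, abs_of_nonneg (by positivity : 0 ≤ K1 * K2)]
    rw [this] at h
    linarith
  have z0 : K1 * E = K1 * |a * b| + K1 * |a * c| + K1 * |a * g| + K1 * |g * b| + K1 * |g * c|
      + K1 * |b * c| + K1 * b ^ 2 + K1 * c ^ 2 + K1 * |g * I2| := by rw [hE]; ring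
  have z1 : a ^ 2 ≤ 2 * (1 / l ^ 2 * P1 + 1 / T ^ 2 * P2 + 1 / c0 * P3)
      + (3 * K1 ^ 2 + 6 * K1) * (b ^ 2 + c ^ 2 + g ^ 2) + 2 * K1 * |g * I2| := by
    have u1 : 0 ≤ K1 * b ^ 2 := by positivity
    have u2 : 0 ≤ K1 * c ^ 2 := by positivity
    have u3 : 0 ≤ K1 * g ^ 2 := by positivity
    linarith
  have z2 := mul_le_mul_of_nonneg_left z1 hK2
  have u4 : 0 ≤ K1 ^ 2 * K2 ^ 2 * b ^ 2 := by positivity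
  have u5 : 0 ≤ K1 ^ 2 * K2 ^ 2 * c ^ 2 := by positivity
  linarith

lemma hQx (Lt T m μ τ x t : ℝ) : HasDerivAt (fun y => carQ Lt T m μ τ y t)
    (-2 * μ * (Lt - x) * carQ Lt T m μ τ x t) x := by
  unfold carQ carEta
  have h1 : HasDerivAt (fun y : ℝ => μ * ((y - Lt) ^ 2 - m * (t - T / 2) ^ 2))
      (μ * (2 * (x - Lt))) x := by
    have := (((((hasDerivAt_id x).sub_const Lt).pow 2).sub_const (m * (t - T / 2) ^ 2)).const_mul μ)
    refine this.congr_deriv ?_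
    simp
  refine (h1.exp.const_mul τ).congr_deriv ?_
  ring

lemma hQt (Lt T m μ τ x t : ℝ) : HasDerivAt (fun s => carQ Lt T m μ τ x s)
    (-2 * m * μ * (t - T / 2) * carQ Lt T m μ τ x t) t := by
  unfold carQ carEta
  have h1 : HasDerivAt (fun s : ℝ => μ * ((x - Lt) ^ 2 - m * (s - T / 2) ^ 2))
      (μ * (-(m * (2 * (t - T / 2))))) t := by
    have := (((((hasDerivAt_id t).sub_const (T / 2)).pow 2).const_mul m).const_sub
      ((x - Lt) ^ 2)).const_mul μ
    refine this.congr_deriv ?_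
    simp
  refine (h1.exp.const_mul τ).congr_deriv ?_
  ring

section derivs
variable (Lt T m μ τ : ℝ)

lemma q_x : pdx (carQ Lt T m μ τ) = fun x t => -2 * μ * (Lt - x) * carQ Lt T m μ τ x t := by
  funext x t; exact (hQx Lt T m μ τ x t).deriv
lemma q_t : pdt (carQ Lt T m μ τ) = fun x t => -2 * m * μ * (t - T / 2) * carQ Lt T m μ τ x t := by
  funext x t; exact (hQt Lt T m μ τ x t).deriv

lemma hal (x : ℝ) : HasDerivAt (fun y : ℝ => Lt - y) (-1) x :=
  (hasDerivAt_id x).const_sub Lt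
lemma hsl (t : ℝ) : HasDerivAt (fun y : ℝ => y - T / 2) 1 t :=
  (hasDerivAt_id t).sub_const (T / 2)

lemma q_xx : pdx (pdx (carQ Lt T m μ τ))
    = fun x t => (4 * μ ^ 2 * (Lt - x) ^ 2 + 2 * μ) * carQ Lt T m μ τ x t := by
  rw [q_x]
  funext x t
  refine (((hal Lt x).const_mul (-2 * μ)).mul (hQx Lt T m μ τ x t)).deriv.trans ?_
  ring
lemma q_tt : pdt (pdt (carQ Lt T m μ τ))
    = fun x t => (4 * m ^ 2 * μ ^ 2 * (t - T / 2) ^ 2 - 2 * m * μ) * carQ Lt T m μ τ x t := by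
  rw [q_t]
  funext x t
  refine (((hsl T t).const_mul (-2 * m * μ)).mul (hQt Lt T m μ τ x t)).deriv.trans ?_
  ring
lemma q_tx : pdx (pdt (carQ Lt T m μ τ))
    = fun x t => 4 * m * μ ^ 2 * (Lt - x) * (t - T / 2) * carQ Lt T m μ τ x t := by
  rw [q_t]
  funext x t
  refine ((hQx Lt T m μ τ x t).const_mul (-2 * m * μ * (t - T / 2))).deriv.trans ?_
  ring
lemma q_ttx : pdx (pdt (pdt (carQ Lt T m μ τ)))
    = fun x t => (4 * m ^ 2 * μ ^ 2 * (t - T / 2) ^ 2 - 2 * m * μ)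
      * (-2 * μ * (Lt - x) * carQ Lt T m μ τ x t) := by
  rw [q_tt]
  funext x t
  exact ((hQx Lt T m μ τ x t).const_mul _).deriv
lemma q_xxx : pdx (pdx (pdx (carQ Lt T m μ τ)))
    = fun x t => -(12 * μ ^ 2 * (Lt - x) + 8 * μ ^ 3 * (Lt - x) ^ 3) * carQ Lt T m μ τ x t := by
  rw [q_xx]
  funext x t
  refine (((((hal Lt x).pow 2).const_mul (4 * μ ^ 2)).add_const (2 * μ)).mul
    (hQx Lt T m μ τ x t)).deriv.trans ?_
  simp
  ring

end derivs

/-- cutoff -/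
noncomputable def wX (L₀ L Lt T m μ τ : ℝ) : ℝ → ℝ → ℝ := fun x t =>
  1 - Real.exp (-((x - L₀) * (L - x) * (μ * carQ Lt T m μ τ x t)))
/-- cutoff -/
noncomputable def wY (Lt T m μ τ : ℝ) : ℝ → ℝ → ℝ := fun x t =>
  1 - Real.exp (-(t * (T - t) * (μ * carQ Lt T m μ τ x t)))

lemma Sm.wX (L₀ L Lt T m μ τ : ℝ) : Sm (wX L₀ L Lt T m μ τ) :=
  (Sm.const 1).sub ((((Sm.fst.sub (Sm.const L₀)).mul ((Sm.const L).sub Sm.fst)).mul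
    ((Sm.const μ).mul (Sm.q Lt T m μ τ))).neg.exp)
lemma Sm.wY (Lt T m μ τ : ℝ) : Sm (wY Lt T m μ τ) :=
  (Sm.const 1).sub (((Sm.snd.mul ((Sm.const T).sub Sm.snd)).mul
    ((Sm.const μ).mul (Sm.q Lt T m μ τ))).neg.exp)

lemma hXx (L₀ L Lt T m μ τ x t e n : ℝ)
    (he : e = Real.exp (-((x - L₀) * (L - x) * (μ * carQ Lt T m μ τ x t))))
    (hn : n = (x - L₀) * (L - x) * μ * carQ Lt T m μ τ x t * e) :
    HasDerivAt (fun y => wX L₀ L Lt T m μ τ y t)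
      (e * (L + L₀ - 2 * x) * μ * carQ Lt T m μ τ x t - 2 * μ * (Lt - x) * n) x := by
  unfold wX
  have h := (((((hasDerivAt_id x).sub_const L₀).mul ((hasDerivAt_id x).const_sub L)).mul
    ((hQx Lt T m μ τ x t).const_mul μ)).neg.exp).const_sub 1
  refine h.congr_deriv ?_
  subst hn he
  simp
  ring
lemma hXt (L₀ L Lt T m μ τ x t e n : ℝ)
    (he : e = Real.exp (-((x - L₀) * (L - x) * (μ * carQ Lt T m μ τ x t))))
    (hn : n = (x - L₀) * (L - x) * μ * carQ Lt T m μ τ x t * e) :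
    HasDerivAt (fun s => wX L₀ L Lt T m μ τ x s) (-2 * m * μ * (t - T / 2) * n) t := by
  unfold wX
  have h := ((((hQt Lt T m μ τ x t).const_mul μ).const_mul ((x - L₀) * (L - x))).neg.exp).const_sub 1
  refine h.congr_deriv ?_
  subst hn he
  simp
  ring
lemma hYx (Lt T m μ τ x t e n : ℝ)
    (he : e = Real.exp (-(t * (T - t) * (μ * carQ Lt T m μ τ x t))))
    (hn : n = t * (T - t) * μ * carQ Lt T m μ τ x t * e) :
    HasDerivAt (fun y => wY Lt T m μ τ y t) (-2 * μ * (Lt - x) * n) x := by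
  unfold wY
  have h := ((((hQx Lt T m μ τ x t).const_mul μ).const_mul (t * (T - t))).neg.exp).const_sub 1
  refine h.congr_deriv ?_
  subst hn he
  simp
  ring
lemma hYt (Lt T m μ τ x t e n : ℝ)
    (he : e = Real.exp (-(t * (T - t) * (μ * carQ Lt T m μ τ x t))))
    (hn : n = t * (T - t) * μ * carQ Lt T m μ τ x t * e) :
    HasDerivAt (fun s => wY Lt T m μ τ x s)
      (e * (T - 2 * t) * μ * carQ Lt T m μ τ x t - 2 * m * μ * (t - T / 2) * n) t := by
  unfold wY
  have h := ((((hasDerivAt_id t).mul ((hasDerivAt_id t).const_sub T)).mul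
    ((hQt Lt T m μ τ x t).const_mul μ)).neg.exp).const_sub 1
  refine h.congr_deriv ?_
  subst hn he
  simp
  ring

/-- flux 1 -/
noncomputable def Fa (L₀ L Lt T m μ τ : ℝ) (w : ℝ → ℝ → ℝ) : ℝ → ℝ → ℝ := fun x t =>
  μ ^ 5 * carQ Lt T m μ τ x t ^ 3 * (L + L₀ - 2 * x) * wX L₀ L Lt T m μ τ x t * w x t ^ 2
/-- flux 2 -/
noncomputable def Fb (L₀ L Lt T m μ τ : ℝ) (w : ℝ → ℝ → ℝ) : ℝ → ℝ → ℝ := fun x t =>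
  μ ^ 5 * carQ Lt T m μ τ x t ^ 3 * wX L₀ L Lt T m μ τ x t * (T - 2 * t) * wY Lt T m μ τ x t
    * w x t ^ 2
/-- flux 3 -/
noncomputable def Fc (ρ L₀ L Lt T m μ τ : ℝ) (w : ℝ → ℝ → ℝ) : ℝ → ℝ → ℝ := fun x t =>
  μ ^ 4 * carQ Lt T m μ τ x t ^ 2 * wX L₀ L Lt T m μ τ x t * wY Lt T m μ τ x t * w x t
    * (-6 * ρ * (Lt - x) * pdx w x t + 4 * m * (t - T / 2) * pdt w x t)
/-- flux 4 -/
noncomputable def Fd (L₀ L Lt T m μ τ : ℝ) (w : ℝ → ℝ → ℝ) : ℝ → ℝ → ℝ := fun x t =>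
  μ ^ 4 * carQ Lt T m μ τ x t ^ 2 * wX L₀ L Lt T m μ τ x t * wY Lt T m μ τ x t * w x t
    * (2 * (Lt - x) * pdt w x t)

section fl
variable (ρ L₀ L Lt T m μ τ : ℝ) (w : ℝ → ℝ → ℝ) (hw : Sm w)

lemma Sm.Fa (hw : Sm w) : Sm (Fa L₀ L Lt T m μ τ w) :=
  ((((Sm.const (μ ^ 5)).mul ((Sm.q Lt T m μ τ).pow 3)).mul
    ((Sm.const (L + L₀)).sub ((Sm.const 2).mul Sm.fst))).mul (Sm.wX L₀ L Lt T m μ τ)).mul (hw.pow 2)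
lemma Sm.Fb (hw : Sm w) : Sm (Fb L₀ L Lt T m μ τ w) :=
  (((((Sm.const (μ ^ 5)).mul ((Sm.q Lt T m μ τ).pow 3)).mul (Sm.wX L₀ L Lt T m μ τ)).mul
    ((Sm.const T).sub ((Sm.const 2).mul Sm.snd))).mul (Sm.wY Lt T m μ τ)).mul (hw.pow 2)
lemma Sm.Fc (hw : Sm w) : Sm (Fc ρ L₀ L Lt T m μ τ w) :=
  (((((Sm.const (μ ^ 4)).mul ((Sm.q Lt T m μ τ).pow 2)).mul (Sm.wX L₀ L Lt T m μ τ)).mul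
    (Sm.wY Lt T m μ τ)).mul hw).mul
    ((((Sm.const (-6 * ρ)).mul ((Sm.const Lt).sub Sm.fst)).mul hw.pdx).add
      (((Sm.const (4 * m)).mul (Sm.snd.sub (Sm.const (T / 2)))).mul hw.pdt))
lemma Sm.Fd (hw : Sm w) : Sm (Fd L₀ L Lt T m μ τ w) :=
  (((((Sm.const (μ ^ 4)).mul ((Sm.q Lt T m μ τ).pow 2)).mul (Sm.wX L₀ L Lt T m μ τ)).mul
    (Sm.wY Lt T m μ τ)).mul hw).mul
    (((Sm.const 2).mul ((Sm.const Lt).sub Sm.fst)).mul hw.pdt)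

lemma wX0 (t : ℝ) : wX L₀ L Lt T m μ τ L₀ t = 0 := by simp [wX]
lemma wX1 (t : ℝ) : wX L₀ L Lt T m μ τ L t = 0 := by simp [wX]
lemma wY0 (x : ℝ) : wY Lt T m μ τ x 0 = 0 := by simp [wY]
lemma wY1 (x : ℝ) : wY Lt T m μ τ x T = 0 := by simp [wY]

lemma DFa (hw : Sm w) : DI L₀ L T (pdx (Fa L₀ L Lt T m μ τ w)) = 0 :=
  DI_pdx _ _ _ (Sm.Fa L₀ L Lt T m μ τ w hw) (fun t => by simp [Fa, wX0]) (fun t => by simp [Fa, wX1])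
lemma DFb (hw : Sm w) : DI L₀ L T (pdt (Fb L₀ L Lt T m μ τ w)) = 0 :=
  DI_pdt _ _ _ (Sm.Fb L₀ L Lt T m μ τ w hw) (fun t => by simp [Fb, wY0]) (fun t => by simp [Fb, wY1])
lemma DFc (hw : Sm w) : DI L₀ L T (pdx (Fc ρ L₀ L Lt T m μ τ w)) = 0 :=
  DI_pdx _ _ _ (Sm.Fc ρ L₀ L Lt T m μ τ w hw) (fun t => by simp [Fc, wX0]) (fun t => by simp [Fc, wX1])
lemma DFd (hw : Sm w) : DI L₀ L T (pdt (Fd L₀ L Lt T m μ τ w)) = 0 :=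
  DI_pdt _ _ _ (Sm.Fd L₀ L Lt T m μ τ w hw) (fun t => by simp [Fd, wY0]) (fun t => by simp [Fd, wY1])
end fl

set_option maxHeartbeats 4000000 in
/-- pointwise estimate -/
lemma pointwise {ρ L₀ L Lt T m μ τ M x t : ℝ} (h1 : L₀ < L) (h2 : L < Lt) (hρ : 0 < ρ) (hT : 0 < T)
    (hm0 : 0 < m) (hm1 : m < 1) (hmT : m * T < Real.sqrt ρ * (Lt - L) / 2)
    (hμ : 1 ≤ μ) (hτ : 1 ≤ τ) (hM : 1 ≤ M) (hMα : Lt - L₀ ≤ M) (hMT : T ≤ M) (hMρ : ρ ≤ M)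
    (hMl : L - L₀ ≤ M) (hx : x ∈ Set.Icc L₀ L) (ht : t ∈ Set.Icc 0 T)
    {w : ℝ → ℝ → ℝ} (hw : Sm w) {K1 K2 c0 : ℝ} (hc0 : c0 = 7 * ρ * (Lt - L) ^ 3)
    (hK1 : K1 = 100 * M ^ 4 * (1 / (L - L₀) ^ 2 + 1 / T ^ 2 + 1 / c0))
    (hK2 : K2 = 8 * (100 * M ^ 4) ^ 2) :
    2 * carS ρ Lt T m μ τ w x t ^ 2 ≤ 2 * K2 * (1 / (L - L₀) ^ 2 * pdx (Fa L₀ L Lt T m μ τ w) x t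
        + 1 / T ^ 2 * pdt (Fb L₀ L Lt T m μ τ w) x t
        + 1 / c0 * (pdx (Fc ρ L₀ L Lt T m μ τ w) x t + pdt (Fd L₀ L Lt T m μ τ w) x t))
      + (K2 + (K2 * (3 * K1 ^ 2 + 6 * K1) + K1 ^ 2 * K2 ^ 2))
        * ((μ ^ 2 * carQ Lt T m μ τ x t * pdx w x t) ^ 2
          + (μ ^ 2 * carQ Lt T m μ τ x t * pdt w x t) ^ 2
          + (μ ^ 3 * carQ Lt T m μ τ x t * w x t) ^ 2)
      + carI2 ρ Lt T m μ τ w x t ^ 2 := by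
  obtain ⟨hx1, hx2⟩ := hx
  obtain ⟨ht1, ht2⟩ := ht
  have hQp : 0 < carQ Lt T m μ τ x t := by
    unfold carQ carEta
    positivity
  obtain ⟨e1, he1⟩ : ∃ e, e = Real.exp (-((x - L₀) * (L - x) * (μ * carQ Lt T m μ τ x t))) :=
    ⟨_, rfl⟩
  obtain ⟨e2, he2⟩ : ∃ e, e = Real.exp (-(t * (T - t) * (μ * carQ Lt T m μ τ x t))) := ⟨_, rfl⟩
  obtain ⟨n1, hn1⟩ : ∃ n, n = (x - L₀) * (L - x) * μ * carQ Lt T m μ τ x t * e1 := ⟨_, rfl⟩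
  obtain ⟨n2, hn2⟩ : ∃ n, n = t * (T - t) * μ * carQ Lt T m μ τ x t * e2 := ⟨_, rfl⟩
  have zb : ∀ z : ℝ, 0 ≤ z → 0 < Real.exp (-z) ∧ Real.exp (-z) ≤ 1 ∧ |z * Real.exp (-z)| ≤ 1 := by
    intro z hz
    refine ⟨Real.exp_pos _, by rw [Real.exp_le_one_iff]; linarith, ?_⟩
    rw [abs_of_nonneg (by positivity), Real.exp_neg]
    rw [mul_inv_le_iff₀ (Real.exp_pos _)]
    linarith [Real.add_one_le_exp z]
  have hz1 : 0 ≤ (x - L₀) * (L - x) * (μ * carQ Lt T m μ τ x t) :=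
    mul_nonneg (mul_nonneg (by linarith) (by linarith)) (by positivity)
  have hz2 : 0 ≤ t * (T - t) * (μ * carQ Lt T m μ τ x t) :=
    mul_nonneg (mul_nonneg (by linarith) (by linarith)) (by positivity)
  obtain ⟨a1, a2, a3⟩ := zb _ hz1
  obtain ⟨b1, b2, b3⟩ := zb _ hz2
  rw [← he1] at a1 a2 a3
  rw [← he2] at b1 b2 b3
  have hn1b : |n1| ≤ 1 := by rw [hn1]; convert a3 using 2; ring
  have hn2b : |n2| ≤ 1 := by rw [hn2]; convert b3 using 2; ring
  have hX : wX L₀ L Lt T m μ τ x t = 1 - e1 := by rw [he1]; rfl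
  have hY : wY Lt T m μ τ x t = 1 - e2 := by rw [he2]; rfl
  have dXx := hXx L₀ L Lt T m μ τ x t e1 n1 he1 hn1
  have dXt := hXt L₀ L Lt T m μ τ x t e1 n1 he1 hn1
  have dYx := hYx Lt T m μ τ x t e2 n2 he2 hn2
  have dYt := hYt Lt T m μ τ x t e2 n2 he2 hn2
  have dQx := hQx Lt T m μ τ x t
  have dQt := hQt Lt T m μ τ x t
  have wx := hw.hx x t
  have wt := hw.ht x t
  have wxx := hw.pdx.hx x t
  have wtx := hw.pdt.hx x t
  have wtt := hw.pdt.ht x t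
  have dD1 : HasDerivAt (fun y : ℝ => L + L₀ - 2 * y) (-2) x := by
    refine (((hasDerivAt_id x).const_mul 2).const_sub (L + L₀)).congr_deriv ?_
    simp
  have dD2 : HasDerivAt (fun y : ℝ => T - 2 * y) (-2) t := by
    refine (((hasDerivAt_id t).const_mul 2).const_sub T).congr_deriv ?_
    simp
  have eFa := (((((dQx.pow 3).const_mul (μ ^ 5)).mul dD1).mul dXx).mul (wx.pow 2)).deriv
  have eFb := ((((((dQt.pow 3).const_mul (μ ^ 5)).mul dXt).mul dD2).mul dYt).mul (wt.pow 2)).deriv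
  have eFc := ((((((dQx.pow 2).const_mul (μ ^ 4)).mul dXx).mul dYx).mul wx).mul
    ((((hal Lt x).const_mul (-6 * ρ)).mul wxx).add (wtx.const_mul (4 * m * (t - T / 2))))).deriv
  have eFd := ((((((dQt.pow 2).const_mul (μ ^ 4)).mul dXt).mul dYt).mul wt).mul
    (wtt.const_mul (2 * (Lt - x)))).deriv
  change pdx (Fa L₀ L Lt T m μ τ w) x t = _ at eFa
  change pdt (Fb L₀ L Lt T m μ τ w) x t = _ at eFb
  change pdx (Fc ρ L₀ L Lt T m μ τ w) x t = _ at eFc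
  change pdt (Fd L₀ L Lt T m μ τ w) x t = _ at eFd
  have hν : (1 / μ) * μ = 1 := by field_simp
  have hν1 : |1 / μ| ≤ 1 := by
    rw [abs_of_nonneg (by positivity), div_le_one (by linarith)]; exact hμ
  have hα : |Lt - x| ≤ M := by rw [abs_le]; constructor <;> linarith
  have hs : |t - T / 2| ≤ M := by rw [abs_le]; constructor <;> linarith
  have hD1 : |L + L₀ - 2 * x| ≤ M := by rw [abs_le]; constructor <;> linarith
  have hD2 : |T - 2 * t| ≤ M := by rw [abs_le]; constructor <;> linarith
  have hXb : |wX L₀ L Lt T m μ τ x t| ≤ 1 := by rw [hX, abs_le]; constructor <;> linarith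
  have hYb : |wY Lt T m μ τ x t| ≤ 1 := by rw [hY, abs_le]; constructor <;> linarith
  have he1b : |e1| ≤ 1 := by rw [abs_le]; constructor <;> linarith
  have he2b : |e2| ≤ 1 := by rw [abs_le]; constructor <;> linarith
  have hmb : |m| ≤ 1 := by rw [abs_le]; constructor <;> linarith
  have hρb : |ρ| ≤ M := by rw [abs_le]; constructor <;> linarith
  have A1 := alg1 (w := w x t) (wx := pdx w x t) (l := L - L₀) (d := (x - L₀) * (L - x))
    hM hν hν1 hα hD1 hXb hn1b rfl rfl rfl (by ring) hn1.symm
  have A2 := alg2 (w := w x t) (wt := pdt w x t) (T := T) (d := t * (T - t))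
    hM hν hν1 hmb hs hD2 hXb hYb hn1b hn2b rfl rfl rfl (by ring) hn2.symm
  have A3 := alg3 (w := w x t) (wx := pdx w x t) (wt := pdt w x t) (wxx := pdx (pdx w) x t)
    (wtx := pdx (pdt w) x t) (wtt := pdt (pdt w) x t) (Q := carQ Lt T m μ τ x t)
    hM hν hν1 hmb hs hα hρb hD1 hD2 hXb he1b he2b hYb hn1b hn2b
    rfl rfl rfl rfl _ _ _ _ _ _ _ _ _ _ rfl rfl rfl rfl rfl rfl rfl rfl rfl rfl
  have AS := algS (S := carS ρ Lt T m μ τ w x t) (w := w x t) (wx := pdx w x t) (wt := pdt w x t) (Q := carQ Lt T m μ τ x t)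
    hM hν hν1 hmb hs hα hρb rfl rfl rfl rfl _ _ _ _ _ _ _ rfl rfl rfl rfl rfl rfl rfl
    (by unfold carS; rw [q_xxx, q_ttx, q_xx, q_tt, q_tx, q_x, q_t])
  have hI2 : carI2 ρ Lt T m μ τ w x t
      = 3 * ρ * (-2 * μ * (Lt - x) * carQ Lt T m μ τ x t) * pdx (pdx w) x t
      + (-(2 * (-2 * m * μ * (t - T / 2) * carQ Lt T m μ τ x t))) * pdx (pdt w) x t
      + (-(-2 * μ * (Lt - x) * carQ Lt T m μ τ x t)) * pdt (pdt w) x t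
      + (-(-2 * μ * (Lt - x) * carQ Lt T m μ τ x t)
          * (-2 * m * μ * (t - T / 2) * carQ Lt T m μ τ x t) ^ 2
        + ρ * (-2 * μ * (Lt - x) * carQ Lt T m μ τ x t) ^ 3) * w x t := by
    unfold carI2
    rw [q_x, q_t]
  rw [← hI2] at A3
  have hc0p : 0 < c0 := by
    rw [hc0]
    have : 0 < Lt - L := by linarith
    positivity
  -- ellipticity
  have ell : c0 ≤ 8 * (Lt - x) * (ρ * (Lt - x) ^ 2 - m ^ 2 * (t - T / 2) ^ 2) := by
    have hsr : Real.sqrt ρ ^ 2 = ρ := Real.sq_sqrt hρ.le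
    have p1 : 0 < Lt - L := by linarith
    have p2 : Lt - L ≤ Lt - x := by linarith
    have p3 : (m * (t - T / 2)) ^ 2 ≤ (Real.sqrt ρ * (Lt - x) / 4) ^ 2 := by
      have k1 : Real.sqrt ρ * (Lt - L) ≤ Real.sqrt ρ * (Lt - x) :=
        mul_le_mul_of_nonneg_left p2 (Real.sqrt_nonneg ρ)
      have k2 : m * (t - T / 2) ≤ m * (T / 2) := mul_le_mul_of_nonneg_left (by linarith) hm0.le
      have k3 : m * (-(T / 2)) ≤ m * (t - T / 2) :=
        mul_le_mul_of_nonneg_left (by linarith) hm0.le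
      apply sq_le_sq' <;> linarith
    have p4 : (Lt - L) ^ 3 ≤ (Lt - x) ^ 3 := by gcongr
    have p5 : (Real.sqrt ρ * (Lt - x) / 4) ^ 2 = ρ * (Lt - x) ^ 2 / 16 := by
      rw [div_pow, mul_pow, hsr]; norm_num
    rw [p5, mul_pow] at p3
    have p6 : 8 * (Lt - x) * (15 / 16 * ρ * (Lt - x) ^ 2)
        ≤ 8 * (Lt - x) * (ρ * (Lt - x) ^ 2 - m ^ 2 * (t - T / 2) ^ 2) := by
      apply mul_le_mul_of_nonneg_left _ (by linarith)
      linarith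
    have p7 : ρ * (Lt - L) ^ 3 ≤ ρ * (Lt - x) ^ 3 := by gcongr
    have p8 : 0 ≤ ρ * (Lt - x) ^ 3 := by
      have : 0 < Lt - x := by linarith
      positivity
    rw [hc0]
    linarith
  have A3' : c0 * wX L₀ L Lt T m μ τ x t * wY Lt T m μ τ x t
      * (μ ^ 3 * carQ Lt T m μ τ x t ^ 2 * w x t) ^ 2
      ≤ 8 * (Lt - x) * (ρ * (Lt - x) ^ 2 - m ^ 2 * (t - T / 2) ^ 2)
        * wX L₀ L Lt T m μ τ x t * wY Lt T m μ τ x t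
        * (μ ^ 3 * carQ Lt T m μ τ x t ^ 2 * w x t) ^ 2 := by
    have : 0 ≤ wX L₀ L Lt T m μ τ x t := by rw [hX]; linarith
    have : 0 ≤ wY Lt T m μ τ x t := by rw [hY]; linarith
    gcongr
  have A3'' := A3'.trans A3
  have B1 := A1.trans (add_le_add (le_of_eq (show _ = pdx (Fa L₀ L Lt T m μ τ w) x t from by
    rw [eFa]; simp only [Pi.mul_apply, Pi.pow_apply, Pi.add_apply]; push_cast; ring)) le_rfl)
  have B2 := A2.trans (add_le_add (le_of_eq (show _ = pdt (Fb L₀ L Lt T m μ τ w) x t from by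
    rw [eFb]; simp only [Pi.mul_apply, Pi.pow_apply, Pi.add_apply]; push_cast; ring)) le_rfl)
  have B3 := A3''.trans (add_le_add (le_of_eq (show _ = pdx (Fc ρ L₀ L Lt T m μ τ w) x t
      + pdt (Fd L₀ L Lt T m μ τ w) x t from by
    rw [eFc, eFd]; simp only [Pi.mul_apply, Pi.pow_apply, Pi.add_apply]; push_cast; ring)) le_rfl)
  have AF := algF (sub_pos.2 h1) hT hc0p (by positivity) hX hY B1 B2 B3 K1 hK1 K2
    (by rw [hK2]; positivity)
  rw [show (4 * (100 * M ^ 4) ^ 2 : ℝ) = K2 / 2 by rw [hK2]; ring] at AS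
  linarith

lemma e4aux (a b s : ℝ) : 2 * (a * b) ≤ 2 * (a + b + s) ^ 2 + 2 * s ^ 2 - b ^ 2 := by
  have : 2 * (a + b + s) ^ 2 + 2 * s ^ 2 - b ^ 2 - 2 * (a * b) = (a + b + 2 * s) ^ 2 + a ^ 2 := by
    ring
  linarith [sq_nonneg (a + b + 2 * s), sq_nonneg a]

lemma DI_lin (L₀ L T d : ℝ) {f g : ℝ → ℝ → ℝ} (hf : Sm f) (hg : Sm g) :
    DI L₀ L T (fun x t => f x t + d * g x t) = DI L₀ L T f + d * DI L₀ L T g := by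
  rw [← DI_smul]
  exact DI_add L₀ L T hf.cont ((Sm.const d).mul hg).cont

lemma Sm.P (ρ : ℝ) {v : ℝ → ℝ → ℝ} (hv : Sm v) : Sm (carP ρ v) :=
  hv.pdt.pdt.pdx.sub ((Sm.const ρ).mul hv.pdx.pdx.pdx)
lemma Sm.I1 (ρ Lt T m μ τ : ℝ) {w : ℝ → ℝ → ℝ} (hw : Sm w) : Sm (carI1 ρ Lt T m μ τ w) :=
  ((((Sm.const (-ρ)).mul hw.pdx.pdx.pdx).add hw.pdt.pdt.pdx).add
    (((((Sm.const (3 * ρ)).mul ((Sm.q Lt T m μ τ).pdx.pow 2)).neg).add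
      ((Sm.q Lt T m μ τ).pdt.pow 2)).mul hw.pdx)).add
    ((((Sm.const 2).mul (Sm.q Lt T m μ τ).pdx).mul (Sm.q Lt T m μ τ).pdt).mul hw.pdt)
lemma Sm.I2 (ρ Lt T m μ τ : ℝ) {w : ℝ → ℝ → ℝ} (hw : Sm w) : Sm (carI2 ρ Lt T m μ τ w) :=
  (((((Sm.const (3 * ρ)).mul (Sm.q Lt T m μ τ).pdx).mul hw.pdx.pdx).add
    (((Sm.const 2).mul (Sm.q Lt T m μ τ).pdt).neg.mul hw.pdt.pdx)).add
    ((Sm.q Lt T m μ τ).pdx.neg.mul hw.pdt.pdt)).add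
    ((((Sm.q Lt T m μ τ).pdx.neg.mul ((Sm.q Lt T m μ τ).pdt.pow 2)).add
      ((Sm.const ρ).mul ((Sm.q Lt T m μ τ).pdx.pow 3))).mul hw)

set_option maxHeartbeats 2000000 in
lemma part2 {ρ L₀ L Lt T m μ τ M : ℝ} (h1 : L₀ < L) (h2 : L < Lt) (hρ : 0 < ρ) (hT : 0 < T)
    (hm0 : 0 < m) (hm1 : m < 1) (hmT : m * T < Real.sqrt ρ * (Lt - L) / 2)
    (hμ : 1 ≤ μ) (hτ : 1 ≤ τ) (hM : 1 ≤ M) (hMα : Lt - L₀ ≤ M) (hMT : T ≤ M) (hMρ : ρ ≤ M)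
    (hMl : L - L₀ ≤ M) {K1 K2 K4 c0 : ℝ} (hc0 : c0 = 7 * ρ * (Lt - L) ^ 3)
    (hK1 : K1 = 100 * M ^ 4 * (1 / (L - L₀) ^ 2 + 1 / T ^ 2 + 1 / c0))
    (hK2 : K2 = 8 * (100 * M ^ 4) ^ 2)
    (hK4 : K4 = (K2 + (K2 * (3 * K1 ^ 2 + 6 * K1) + K1 ^ 2 * K2 ^ 2))) (hK4p : 0 ≤ K4)
    (v w : ℝ → ℝ → ℝ) (hv : Sm v) (hwv : ∀ y s : ℝ, w y s = carTheta Lt T m μ τ y s * v y s) :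
    2 * DI L₀ L T (fun x t => carI1 ρ Lt T m μ τ w x t * carI2 ρ Lt T m μ τ w x t) ≤
      (2 + K4) * (DI L₀ L T (fun x t => (carTheta Lt T m μ τ x t) ^ 2 * (carP ρ v x t) ^ 2)
        + τ ^ 2 * μ ^ 4 * DI L₀ L T (fun x t =>
            ((pdx w x t) ^ 2 + (pdt w x t) ^ 2) * (carEta Lt T m μ x t) ^ 2)
        + τ ^ 4 * μ ^ 6 * DI L₀ L T (fun x t => (w x t) ^ 2 * (carEta Lt T m μ x t) ^ 2)) := by
  have hth : Sm (carTheta Lt T m μ τ) := (Sm.q Lt T m μ τ).exp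
  have hw : Sm w := by
    have : w = fun y s => carTheta Lt T m μ τ y s * v y s := by
      funext y s; exact hwv y s
    rw [this]
    exact hth.mul hv
  have sA := (hth.pow 2).mul ((Sm.P ρ hv).pow 2)
  have sB := ((hw.pdx.pow 2).add (hw.pdt.pow 2)).mul ((Sm.eta Lt T m μ).pow 2)
  have sC := (hw.pow 2).mul ((Sm.eta Lt T m μ).pow 2)
  have sI := (Sm.I1 ρ Lt T m μ τ hw).mul (Sm.I2 ρ Lt T m μ τ hw)
  have s1 := (Sm.Fa L₀ L Lt T m μ τ w hw).pdx
  have s2 := (Sm.Fb L₀ L Lt T m μ τ w hw).pdt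
  have s3 := (Sm.Fc ρ L₀ L Lt T m μ τ w hw).pdx
  have s4 := (Sm.Fd L₀ L Lt T m μ τ w hw).pdt
  have z1 := DFa L₀ L Lt T m μ τ w hw
  have z2 := DFb L₀ L Lt T m μ τ w hw
  have z3 := DFc ρ L₀ L Lt T m μ τ w hw
  have z4 := DFd L₀ L Lt T m μ τ w hw
  have nn : ∀ {f : ℝ → ℝ → ℝ}, Sm f → (∀ x t, 0 ≤ f x t) → 0 ≤ DI L₀ L T f := by
    intro f hf h
    have := DI_mono h1.le hT.le (Sm.const 0).cont hf.cont (fun x _ t _ => h x t)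
    simpa [DI] using this
  have nA := nn sA (fun x t => by positivity)
  have nB := nn sB (fun x t => by positivity)
  have nC := nn sC (fun x t => by positivity)
  have key := DI_mono h1.le hT.le ((Sm.const 2).mul sI).cont
    (((((((((Sm.const 2).mul sA).add ((Sm.const (K4 * (τ ^ 2 * μ ^ 4))).mul sB)).add
      ((Sm.const (K4 * (τ ^ 4 * μ ^ 6))).mul sC)).add
      ((Sm.const (2 * K2 * (1 / (L - L₀) ^ 2))).mul s1)).add
      ((Sm.const (2 * K2 * (1 / T ^ 2))).mul s2)).add
      ((Sm.const (2 * K2 * (1 / c0))).mul s3)).add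
      ((Sm.const (2 * K2 * (1 / c0))).mul s4))).cont (by
    intro x hx t ht
    have hp := pointwise h1 h2 hρ hT hm0 hm1 hmT hμ hτ hM hMα hMT hMρ hMl hx ht hw hc0 hK1 hK2
    rw [← hK4] at hp
    have hid := part1 ρ Lt T m μ τ v w hv hwv x t
    have e1 : (μ ^ 2 * carQ Lt T m μ τ x t * pdx w x t) ^ 2
          + (μ ^ 2 * carQ Lt T m μ τ x t * pdt w x t) ^ 2
          = τ ^ 2 * μ ^ 4 * ((pdx w x t ^ 2 + pdt w x t ^ 2) * carEta Lt T m μ x t ^ 2) := by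
      unfold carQ; ring
    have e2 : (μ ^ 3 * carQ Lt T m μ τ x t * w x t) ^ 2
        ≤ τ ^ 4 * μ ^ 6 * (w x t ^ 2 * carEta Lt T m μ x t ^ 2) := by
      have : (μ ^ 3 * carQ Lt T m μ τ x t * w x t) ^ 2
        = τ ^ 2 * μ ^ 6 * (w x t ^ 2 * carEta Lt T m μ x t ^ 2) := by unfold carQ; ring
      rw [this]
      have : τ ^ 2 ≤ τ ^ 4 := pow_le_pow_right₀ hτ (by norm_num)
      gcongr
    rw [e1] at hp
    have e3 := mul_le_mul_of_nonneg_left e2 hK4p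
    have e4 : 2 * (carI1 ρ Lt T m μ τ w x t * carI2 ρ Lt T m μ τ w x t)
        ≤ 2 * (carTheta Lt T m μ τ x t ^ 2 * carP ρ v x t ^ 2)
          + 2 * carS ρ Lt T m μ τ w x t ^ 2 - carI2 ρ Lt T m μ τ w x t ^ 2 := by
      rw [← mul_pow, hid]
      exact e4aux _ _ _
    linarith)
  have t1 := ((Sm.const 2).mul sA).add ((Sm.const (K4 * (τ ^ 2 * μ ^ 4))).mul sB)
  have t2 := t1.add ((Sm.const (K4 * (τ ^ 4 * μ ^ 6))).mul sC)
  have t3 := t2.add ((Sm.const (2 * K2 * (1 / (L - L₀) ^ 2))).mul s1)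
  have t4 := t3.add ((Sm.const (2 * K2 * (1 / T ^ 2))).mul s2)
  have t5 := t4.add ((Sm.const (2 * K2 * (1 / c0))).mul s3)
  have u0 := DI_smul L₀ L T 2 (fun x t => (carTheta Lt T m μ τ x t) ^ 2 * (carP ρ v x t) ^ 2)
  have u1 := DI_lin L₀ L T (K4 * (τ ^ 2 * μ ^ 4)) ((Sm.const 2).mul sA) sB
  have u2 := DI_lin L₀ L T (K4 * (τ ^ 4 * μ ^ 6)) t1 sC
  have u3 := DI_lin L₀ L T (2 * K2 * (1 / (L - L₀) ^ 2)) t2 s1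
  have u4 := DI_lin L₀ L T (2 * K2 * (1 / T ^ 2)) t3 s2
  have u5 := DI_lin L₀ L T (2 * K2 * (1 / c0)) t4 s3
  have u6 := DI_lin L₀ L T (2 * K2 * (1 / c0)) t5 s4
  have u7 := DI_smul L₀ L T 2 (fun x t => carI1 ρ Lt T m μ τ w x t * carI2 ρ Lt T m μ τ w x t)
  rw [u7, u6, u5, u4, u3, u2, u1, u0, z1, z2, z3, z4] at key
  have v1 : 0 ≤ K4 * DI L₀ L T (fun x t => (carTheta Lt T m μ τ x t) ^ 2 * (carP ρ v x t) ^ 2) :=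
    mul_nonneg hK4p nA
  have v2 : 0 ≤ τ ^ 2 * μ ^ 4 * DI L₀ L T (fun x t =>
            ((pdx w x t) ^ 2 + (pdt w x t) ^ 2) * (carEta Lt T m μ x t) ^ 2) :=
    mul_nonneg (by positivity) nB
  have v3 : 0 ≤ τ ^ 4 * μ ^ 6 * DI L₀ L T (fun x t => (w x t) ^ 2 * (carEta Lt T m μ x t) ^ 2) :=
    mul_nonneg (by positivity) nC
  linarith

/-- Decomposition of the conjugated Carleman operator `θP` into `I₁ + I₂ + S`, and the
upper bound for the cross term `2∫∫ I₁(ṽ)I₂(ṽ)` (paper, Step 2 of the gradient-property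
proof). -/
theorem stmt_5 (L₀ L Lt ρ T m μ τ : ℝ)
    (h0 : 0 ≤ L₀) (h1 : L₀ < L) (h2 : L < Lt) (hρ : 0 < ρ) (hT : 0 < T)
    (hm0 : 0 < m) (hm1 : m < 1) (hmT : m * T < Real.sqrt ρ * (Lt - L) / 2)
    (hμ : 1 ≤ μ) (hτ : 1 ≤ τ) :
    (∀ v w : ℝ → ℝ → ℝ, (∀ n : ℕ, ContDiff ℝ n (Function.uncurry v)) →
      (∀ y s : ℝ, w y s = carTheta Lt T m μ τ y s * v y s) →
      ∀ x t : ℝ,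
        carTheta Lt T m μ τ x t * carP ρ v x t =
          carI1 ρ Lt T m μ τ w x t + carI2 ρ Lt T m μ τ w x t + carS ρ Lt T m μ τ w x t) ∧
    (∃ μ₀ ≥ (1:ℝ), ∃ C > (0:ℝ), ∀ μ' ≥ μ₀, ∀ τ' ≥ (1:ℝ),
      ∀ v w : ℝ → ℝ → ℝ, (∀ n : ℕ, ContDiff ℝ n (Function.uncurry v)) →
        (∀ y s : ℝ, w y s = carTheta Lt T m μ' τ' y s * v y s) →
        2 * (∫ t in (0:ℝ)..T, (∫ x in L₀..L,
              carI1 ρ Lt T m μ' τ' w x t * carI2 ρ Lt T m μ' τ' w x t)) ≤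
        C * ((∫ t in (0:ℝ)..T, (∫ x in L₀..L,
                (carTheta Lt T m μ' τ' x t) ^ 2 * (carP ρ v x t) ^ 2))
          + τ' ^ 2 * μ' ^ 4 * (∫ t in (0:ℝ)..T, (∫ x in L₀..L,
                ((pdx w x t) ^ 2 + (pdt w x t) ^ 2) * (carEta Lt T m μ' x t) ^ 2))
          + τ' ^ 4 * μ' ^ 6 * (∫ t in (0:ℝ)..T, (∫ x in L₀..L,
                (w x t) ^ 2 * (carEta Lt T m μ' x t) ^ 2)))) := by
  refine ⟨fun v w hv hw x t => part1 ρ Lt T m μ τ v w (contDiff_infty.2 hv) hw x t, ?_⟩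
  have hM : ∃ M : ℝ, 1 ≤ M ∧ Lt - L₀ ≤ M ∧ T ≤ M ∧ ρ ≤ M ∧ L - L₀ ≤ M :=
    ⟨1 + (Lt - L₀) + T + ρ, by linarith, by linarith, by linarith, by linarith, by linarith⟩
  obtain ⟨M, m1, m2, m3, m4, m5⟩ := hM
  obtain ⟨c0, hc0⟩ : ∃ c, c = 7 * ρ * (Lt - L) ^ 3 := ⟨_, rfl⟩
  obtain ⟨K1, hK1⟩ : ∃ K, K = 100 * M ^ 4 * (1 / (L - L₀) ^ 2 + 1 / T ^ 2 + 1 / c0) := ⟨_, rfl⟩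
  obtain ⟨K2, hK2⟩ : ∃ K, K = 8 * (100 * M ^ 4) ^ 2 := ⟨_, rfl⟩
  obtain ⟨K4, hK4⟩ : ∃ K, K = (K2 + (K2 * (3 * K1 ^ 2 + 6 * K1) + K1 ^ 2 * K2 ^ 2)) := ⟨_, rfl⟩
  have hc0p : 0 < c0 := by
    rw [hc0]
    have : 0 < Lt - L := by linarith
    positivity
  have hK1p : 0 ≤ K1 := by rw [hK1]; positivity
  have hK2p : 0 ≤ K2 := by rw [hK2]; positivity
  have hK4p : 0 ≤ K4 := by rw [hK4]; positivity
  refine ⟨1, le_rfl, 2 + K4, by linarith, fun μ' hμ' τ' hτ' v w hv hw => ?_⟩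
  exact part2 h1 h2 hρ hT hm0 hm1 hmT hμ' hτ' m1 m2 m3 m4 m5 hc0 hK1 hK2 hK4 hK4p v w
    (contDiff_infty.2 hv) hw
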